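/- Every play-once n-person deterministic graphical game satisfying condition (C0) has a Nash equilibrium in pure stationary strategies. That is: suppose the DG game is play-once, meaning |Vᵢ| = 1 for every player i ∈ {1,…,n}, and the payoff u satisfies (C0): u(i, t) > u(i, c) for every player i, every terminal outcome t and every cyclic outcome c. Then there exists a strategy profile x such that for each player i and each profile x' differing from x only in player i's strategy, u(i, g(x)) ≥ u(i, g(x')). -/

import Mathlib

open Relation

/-- A vertex is terminal iff it has no outgoing edge. -/
def isTerminal {V : Type*} (E : V → V → Prop) (v : V) : Prop := ∀ w, ¬ E v w

/-- The strongly connected component of `v`: all vertices mutually reachable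
with `v` (reachability = reflexive-transitive closure of `E`). -/
def scc {V : Type*} (E : V → V → Prop) (v : V) : Set V :=
  {w | ReflTransGen E v w ∧ ReflTransGen E w v}

/-- A set of vertices is closed if no edge leaves it. -/
def IsClosed' {V : Type*} (E : V → V → Prop) (S : Set V) : Prop :=
  ∀ a ∈ S, ∀ b, E a b → b ∈ S

/-- A terminal outcome: a closed strongly connected component (in particular,
the singleton component of every terminal vertex). -/
def TerminalOutcome {V : Type*} (E : V → V → Prop) (S : Set V) : Prop :=
  (∃ v, S = scc E v) ∧ IsClosed' E S

/-- A cyclic outcome: a non-closed strongly connected component containing a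
directed cycle. -/
def CyclicOutcome {V : Type*} (E : V → V → Prop) (S : Set V) : Prop :=
  (∃ v, S = scc E v) ∧ ¬ IsClosed' E S ∧ ∃ a ∈ S, TransGen E a a

/-- A strategy profile, encoded as a global successor function: at every
non-terminal position it follows an edge chosen by the controlling player,
and it fixes the terminal positions. -/
def ValidProfile {V : Type*} (E : V → V → Prop) (s : V → V) : Prop :=
  ∀ v, (isTerminal E v → s v = v) ∧ (¬ isTerminal E v → E v (s v))

/-- The outcome of a strategy profile `s` from the initial position `v0`:
after `|V|` steps the play `v0, s v0, s (s v0), …` has entered its periodic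
part (the terminal vertex reached, or the eventual directed cycle), and the
outcome is the strongly connected component containing it. -/
def outcome {V : Type*} [Fintype V] (E : V → V → Prop) (v0 : V) (s : V → V) :
    Set V :=
  scc E (s^[Fintype.card V] v0)

/-- `x` is a Nash equilibrium (in pure stationary strategies): no player `i`
can strictly increase their payoff by a unilateral deviation, i.e. by
switching to a valid profile that agrees with `x` at every position not
controlled by `i`. -/
def IsNE {V : Type*} [Fintype V] (E : V → V → Prop) {n : ℕ}
    (control : V → Fin n) (v0 : V) (u : Fin n → Set V → ℝ) (x : V → V) : Prop :=
  ∀ (i : Fin n) (x' : V → V), ValidProfile E x' →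
    (∀ v, control v ≠ i → x' v = x v) →
    u i (outcome E v0 x) ≥ u i (outcome E v0 x')

/-!
Call a position *forced* if every play from it ends in a closed strongly connected component.
On the forced positions backward induction gives a subgame perfect profile, which settles the case
of a forced initial position. From an unforced initial position one can walk, without entering the
forced region, to some *exit*: an unforced position with a forced successor. Let the play follow
such a walk to the first exit `e`, let `e` choose its best forced successor, and let every other
unforced position stay in the unforced region. The outcome is then terminal. A deviation at an exit
other than `e` changes nothing, since the play meets no such exit; any other deviation either
enters the forced region through `e`, where backward induction and the choice at `e` bound the
gain, or never enters it, and then produces a cyclic outcome.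
-/

section Iterates

variable {V : Type*}

theorem iterate_eq_iterate_of_forall_lt {f g : V → V} {a : V} {k : ℕ}
    (h : ∀ j < k, g (f^[j] a) = f (f^[j] a)) : g^[k] a = f^[k] a := by
  induction k with
  | zero => rfl
  | succ k ih =>
    rw [Function.iterate_succ_apply', Function.iterate_succ_apply',
      ih fun j hj => h j (hj.trans k.lt_succ_self), h k k.lt_succ_self]

theorem iterate_card_mem_periodicPts [Fintype V] (f : V → V) (a : V) :
    f^[Fintype.card V] a ∈ Function.periodicPts f := by
  obtain ⟨i, j, hne, hij⟩ := Fintype.exists_ne_map_eq_of_card_lt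
    (fun i : Fin (Fintype.card V + 1) => f^[i] a) (by simp)
  wlog hlt : i < j generalizing i j
  · exact this j i hne.symm hij.symm (lt_of_le_of_ne (not_lt.mp hlt) hne.symm)
  have hperiod : Function.IsPeriodicPt f (j - i) (f^[i] a) := by
    rw [Function.IsPeriodicPt, Function.IsFixedPt, ← Function.iterate_add_apply,
      Nat.sub_add_cancel hlt.le]
    exact hij.symm
  have htail : f^[Fintype.card V] a = f^[Fintype.card V - i] (f^[i] a) := by
    rw [← Function.iterate_add_apply, Nat.sub_add_cancel (Nat.le_of_lt_succ i.isLt)]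
  rw [htail]
  exact Function.mk_mem_periodicPts (Nat.sub_pos_of_lt hlt) (hperiod.apply_iterate _)

theorem exists_successor_descending {r : V → V → Prop} {D : ℕ → Set V}
    (hD : ∀ n, ∀ v ∈ D (n + 1), ∃ w ∈ D n, r v w) :
    ∃ next : V → V, (∀ v, (∃ w, r v w) → r v (next v)) ∧
      ∀ v ∉ D 0, ∀ n, v ∈ D n → ∃ m < n, next v ∈ D m := by
  classical
  have exists_next (v : V) : ∃ w, ((∃ w, r v w) → r v w) ∧
      (v ∉ D 0 → ∀ n, v ∈ D n → ∃ m < n, w ∈ D m) := by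
    by_cases hv : v ∉ D 0 ∧ ∃ n, v ∈ D n
    · obtain ⟨hv0, hex⟩ := hv
      obtain ⟨n, hn, hmin⟩ : ∃ n, v ∈ D n ∧ ∀ m, v ∈ D m → n ≤ m :=
        ⟨Nat.find hex, Nat.find_spec hex, fun _ => Nat.find_min' hex⟩
      cases n with
      | zero => exact absurd hn hv0
      | succ n =>
        obtain ⟨w, hw, hvw⟩ := hD n v hn
        exact ⟨w, fun _ => hvw, fun _ m hm => ⟨n, hmin m hm, hw⟩⟩
    · have hlevel : v ∉ D 0 → ∀ n, v ∉ D n := fun h0 n hn => hv ⟨h0, n, hn⟩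
      by_cases hex : ∃ w, r v w
      · exact ⟨hex.choose, fun _ => hex.choose_spec, fun h0 n hn => absurd hn (hlevel h0 n)⟩
      · exact ⟨v, fun h => absurd h hex, fun h0 n hn => absurd hn (hlevel h0 n)⟩
  choose next next_rel next_descends using exists_next
  exact ⟨next, next_rel, next_descends⟩

theorem exists_successor_iterate_mem (r : V → V → Prop) (A : Set V) :
    ∃ next : V → V, (∀ v, (∃ w, r v w) → r v (next v)) ∧
      ∀ v, (∃ a ∈ A, ReflTransGen r v a) → ∃ k, next^[k] v ∈ A := by
  -- `v ∈ D n` iff some `r`-path of length `n` leads from `v` into `A`; moving to ever smaller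
  -- levels follows a shortest path.
  let D (n : ℕ) : Set V := (fun S => {v | ∃ w ∈ S, r v w})^[n] A
  have D_succ (n : ℕ) : D (n + 1) = {v | ∃ w ∈ D n, r v w} :=
    Function.iterate_succ_apply' _ _ _
  obtain ⟨next, next_rel, next_descends⟩ :=
    exists_successor_descending (r := r) fun n _ hv => (D_succ n).subset hv
  have reaches_of_mem (n : ℕ) : ∀ v ∈ D n, ∃ k, next^[k] v ∈ A := by
    induction n using Nat.strong_induction_on with
    | _ n ih =>
      intro v hv
      by_cases hvA : v ∈ A
      · exact ⟨0, hvA⟩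
      obtain ⟨m, hmn, hm⟩ := next_descends v hvA n hv
      obtain ⟨k, hk⟩ := ih m hmn _ hm
      exact ⟨k + 1, hk⟩
  have mem_of_reflTransGen {v a : V} (ha : a ∈ A) (hva : ReflTransGen r v a) :
      ∃ n, v ∈ D n := by
    induction hva using ReflTransGen.head_induction_on with
    | refl => exact ⟨0, ha⟩
    | head hbc _ ih =>
      obtain ⟨n, hn⟩ := ih
      exact ⟨n + 1, (D_succ n).superset ⟨_, hn, hbc⟩⟩
  refine ⟨next, next_rel, fun v ⟨a, ha, hva⟩ => ?_⟩
  obtain ⟨n, hn⟩ := mem_of_reflTransGen ha hva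
  exact reaches_of_mem n v hn

theorem exists_backward_induction [Finite V] {α β : Type*} [LinearOrder α] {r : V → V → Prop}
    (wf : WellFounded r) (g : V → β) (f : V → β → α) :
    ∃ τ : V → β, (∀ v, (∀ w, ¬ r w v) → τ v = g v) ∧
      ∀ v, (∃ w, r w v) → ∃ w, r w v ∧ τ v = τ w ∧ ∀ w', r w' v → f v (τ w') ≤ f v (τ w) := by
  have exists_value (v : V) (c : {w // r w v} → β) : ∃ b,
      ((∀ w, ¬ r w v) → b = g v) ∧
        ((∃ w, r w v) → ∃ w, b = c w ∧ ∀ w', f v (c w') ≤ f v (c w)) := by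
    by_cases hv : ∃ w, r w v
    · obtain ⟨w₀, hw₀⟩ := hv
      have : Nonempty {w // r w v} := ⟨w₀, hw₀⟩
      obtain ⟨w, hw⟩ := Finite.exists_max fun w => f v (c w)
      exact ⟨c w, fun h => absurd hw₀ (h w₀), fun _ => ⟨w, rfl, hw⟩⟩
    · exact ⟨g v, fun _ => rfl, fun h => absurd h hv⟩
  choose value value_leaf value_node using exists_value
  let τ : V → β := wf.fix fun v c => value v fun w => c w.1 w.2
  have hτ (v : V) : τ v = value v fun w => τ w.1 := wf.fix_eq _ v
  refine ⟨τ, fun v hv => (hτ v).trans (value_leaf v _ hv), fun v hv => ?_⟩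
  obtain ⟨w, hw, hmax⟩ := value_node v (fun w => τ w.1) hv
  exact ⟨w.1, w.2, (hτ v).trans hw, fun w' hw' => hmax ⟨w', hw'⟩⟩

end Iterates

section Outcomes

variable {V : Type*} {E : V → V → Prop}

theorem self_mem_scc (v : V) : v ∈ scc E v := ⟨.refl, .refl⟩

theorem scc_eq_of_mem {v w : V} (h : w ∈ scc E v) : scc E w = scc E v :=
  Set.ext fun _ => ⟨fun hz => ⟨h.1.trans hz.1, hz.2.trans h.2⟩,
    fun hz => ⟨h.2.trans hz.1, hz.2.trans h.1⟩⟩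

theorem isClosed'_scc_of_isTerminal {v : V} (hv : isTerminal E v) : IsClosed' E (scc E v) := by
  intro a ha b hab
  rcases ReflTransGen.cases_head ha.1 with rfl | ⟨c, hvc, -⟩
  · exact absurd hab (hv b)
  · exact absurd hvc (hv c)

theorem exists_reflTransGen_isClosed'_scc [Finite V] (E : V → V → Prop) (v : V) :
    ∃ z, ReflTransGen E v z ∧ IsClosed' E (scc E z) := by
  obtain ⟨z, hvz, hmin⟩ := (Set.toFinite {w | ReflTransGen E v w}).exists_minimalFor
    (fun w => {y | ReflTransGen E w y}) _ ⟨v, .refl⟩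
  refine ⟨z, hvz, fun a ha b hab => ?_⟩
  have hzb : ReflTransGen E z b := ha.1.tail hab
  exact ⟨hzb, hmin (ReflTransGen.trans hvz hzb) (fun _ => hzb.trans) .refl⟩

variable {x : V → V}

theorem ValidProfile.reflTransGen (hx : ValidProfile E x) (v : V) : ReflTransGen E v (x v) := by
  by_cases hv : isTerminal E v
  · rw [(hx v).1 hv]
  · exact .single ((hx v).2 hv)

theorem ValidProfile.reflTransGen_iterate (hx : ValidProfile E x) (v : V) (k : ℕ) :
    ReflTransGen E v (x^[k] v) := by
  induction k with
  | zero => exact .refl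
  | succ k ih =>
    rw [Function.iterate_succ_apply']
    exact ih.trans (hx.reflTransGen _)

theorem IsClosed'.mem_of_reflTransGen {S : Set V} (hS : IsClosed' E S) {v w : V} (hv : v ∈ S)
    (hvw : ReflTransGen E v w) : w ∈ S := by
  induction hvw with
  | refl => exact hv
  | tail _ hbc ih => exact hS _ ih _ hbc

theorem ValidProfile.edge_of_not_isClosed' (hx : ValidProfile E x) {v : V}
    (hv : ¬ IsClosed' E (scc E v)) : E v (x v) :=
  (hx v).2 fun ht => hv (isClosed'_scc_of_isTerminal ht)

variable [Fintype V]

theorem ValidProfile.outcome_of_isClosed' (hx : ValidProfile E x) {v : V}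
    (hv : IsClosed' E (scc E v)) : outcome E v x = scc E v :=
  scc_eq_of_mem (hv.mem_of_reflTransGen (self_mem_scc v) (hx.reflTransGen_iterate v _))

theorem ValidProfile.reflTransGen_apply_iterate_card (hx : ValidProfile E x) (v : V) :
    ReflTransGen E (x (x^[Fintype.card V] v)) (x^[Fintype.card V] v) := by
  obtain ⟨p, hp, hperiod⟩ := iterate_card_mem_periodicPts x v
  obtain ⟨p, rfl⟩ := Nat.exists_eq_succ_of_ne_zero hp.ne'
  have := hx.reflTransGen_iterate (x (x^[Fintype.card V] v)) p
  rwa [← Function.iterate_succ_apply, hperiod] at this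

theorem ValidProfile.outcome_apply (hx : ValidProfile E x) (v : V) :
    outcome E (x v) x = outcome E v x := by
  rw [outcome, ← Function.iterate_succ_apply, Function.iterate_succ_apply']
  exact scc_eq_of_mem ⟨hx.reflTransGen _, hx.reflTransGen_apply_iterate_card v⟩

theorem ValidProfile.outcome_iterate (hx : ValidProfile E x) (v : V) (k : ℕ) :
    outcome E (x^[k] v) x = outcome E v x := by
  induction k with
  | zero => rfl
  | succ k ih => rw [Function.iterate_succ_apply', hx.outcome_apply, ih]

theorem ValidProfile.cyclicOutcome (hx : ValidProfile E x) {v : V}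
    (hv : ¬ IsClosed' E (scc E (x^[Fintype.card V] v))) : CyclicOutcome E (outcome E v x) :=
  ⟨⟨_, rfl⟩, hv, _, self_mem_scc _,
    .head' (hx.edge_of_not_isClosed' hv) (hx.reflTransGen_apply_iterate_card v)⟩

end Outcomes

section ForcedRegion

variable {V : Type*} {E : V → V → Prop}

/-- The position `v` is forced: whatever the players do, the play from `v` ends in a closed
strongly connected component. -/
inductive IsForced (E : V → V → Prop) : V → Prop
  | closed {v : V} : IsClosed' E (scc E v) → IsForced E v
  | step {v : V} : ¬ IsClosed' E (scc E v) → (∀ w, E v w → IsForced E w) → IsForced E v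

/-- An exit: an unforced position from which one move leads to the forced region. -/
def IsExit (E : V → V → Prop) (v : V) : Prop := ¬ IsForced E v ∧ ∃ w, E v w ∧ IsForced E w

theorem IsForced.of_edge {v w : V} (hv : IsForced E v) (hvw : E v w) : IsForced E w := by
  cases hv with
  | closed h => exact .closed (by rwa [scc_eq_of_mem (h v (self_mem_scc v) w hvw)])
  | step _ h => exact h w hvw

theorem not_isClosed'_of_not_isForced {v : V} (hv : ¬ IsForced E v) : ¬ IsClosed' E (scc E v) :=
  fun h => hv (.closed h)

theorem exists_edge_not_isForced {v : V} (hv : ¬ IsForced E v) : ∃ w, E v w ∧ ¬ IsForced E w := by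
  by_contra! h
  exact hv (.step (not_isClosed'_of_not_isForced hv) h)

theorem wellFounded_edge_isForced (E : V → V → Prop) :
    WellFounded fun w v => E v w ∧ ¬ IsClosed' E (scc E v) ∧ IsForced E v := by
  refine ⟨fun v => ?_⟩
  by_cases hv : IsForced E v
  · induction hv with
    | closed h => exact ⟨_, fun w hw => absurd h hw.2.1⟩
    | step _ _ ih => exact ⟨_, fun w hw => ih w hw.1⟩
  · exact ⟨_, fun w hw => absurd hw.2.2 hv⟩

theorem exists_isExit_reflTransGen [Finite V] {v : V} (hv : ¬ IsForced E v) :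
    ∃ e, IsExit E e ∧ ReflTransGen (fun a b => E a b ∧ ¬ IsForced E b) v e := by
  obtain ⟨z, hvz, hz⟩ := exists_reflTransGen_isClosed'_scc E v
  induction hvz using ReflTransGen.head_induction_on with
  | refl => exact absurd (.closed hz) hv
  | @head a b hab _ ih =>
    by_cases hb : IsForced E b
    · exact ⟨a, ⟨hv, b, hab, hb⟩, .refl⟩
    · obtain ⟨e, he, hbe⟩ := ih hb
      exact ⟨e, he, hbe.head ⟨hab, hb⟩⟩

theorem exists_successor_first_isExit [Finite V] {v₀ : V} (hv₀ : ¬ IsForced E v₀) :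
    ∃ next : V → V, (∀ v, ¬ IsForced E v → E v (next v) ∧ ¬ IsForced E (next v)) ∧
      ∃ k, IsExit E (next^[k] v₀) ∧ ∀ j < k, ¬ IsExit E (next^[j] v₀) := by
  classical
  obtain ⟨next, next_rel, next_reaches⟩ :=
    exists_successor_iterate_mem (fun a b => E a b ∧ ¬ IsForced E b) {v | IsExit E v}
  have hex : ∃ k, IsExit E (next^[k] v₀) := next_reaches v₀ (exists_isExit_reflTransGen hv₀)
  exact ⟨next, fun v hv => next_rel v (exists_edge_not_isForced hv), Nat.find hex,
    Nat.find_spec hex, fun _ => Nat.find_min hex⟩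

variable [Fintype V] {x x' : V → V}

theorem IsForced.terminalOutcome {v : V} (hv : IsForced E v) (hx : ValidProfile E x) :
    TerminalOutcome E (outcome E v x) := by
  induction hv with
  | @closed v h => exact hx.outcome_of_isClosed' h ▸ ⟨⟨v, rfl⟩, h⟩
  | step h _ ih => exact hx.outcome_apply _ ▸ ih _ (hx.edge_of_not_isClosed' h)

theorem IsForced.outcome_congr {v : V} (hv : IsForced E v) (hx : ValidProfile E x)
    (hx' : ValidProfile E x') (h : ∀ w, IsForced E w → x' w = x w) :
    outcome E v x' = outcome E v x := by
  induction hv with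
  | closed hc => rw [hx.outcome_of_isClosed' hc, hx'.outcome_of_isClosed' hc]
  | @step v hc hsucc ih =>
    rw [← hx.outcome_apply, ← hx'.outcome_apply, h v (.step hc hsucc)]
    exact ih _ (hx.edge_of_not_isClosed' hc)

theorem cyclicOutcome_or_exists_enters (hx : ValidProfile E x) {v : V} (hv : ¬ IsForced E v) :
    CyclicOutcome E (outcome E v x) ∨
      ∃ w, ¬ IsForced E w ∧ IsForced E (x w) ∧ outcome E v x = outcome E (x w) x := by
  by_cases hstay : ∀ k, ¬ IsForced E (x^[k] v)
  · exact .inl (hx.cyclicOutcome (not_isClosed'_of_not_isForced (hstay _)))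
  push Not at hstay
  obtain ⟨k, hk, henter⟩ :=
    Nat.exists_not_and_succ_of_not_zero_of_exists (p := fun k => IsForced E (x^[k] v)) hv hstay
  rw [Function.iterate_succ_apply'] at henter
  exact .inr ⟨x^[k] v, hk, henter, by rw [hx.outcome_apply, hx.outcome_iterate]⟩

end ForcedRegion

section Optimality

variable {V α : Type*} [Fintype V] {E : V → V → Prop} {f : V → Set V → α} {x x' : V → V}

/-- No single move from `v` into the forced region, followed by the profile `x`, is better for the
owner of `v` than `x` itself. The payoffs `f` are indexed by positions instead of players. -/
def IsOneShotOptimalAt [LE α] (E : V → V → Prop) (f : V → Set V → α) (x : V → V) (v : V) : Prop :=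
  ∀ w, E v w → IsForced E w → f v (outcome E w x) ≤ f v (outcome E v x)

theorem IsForced.le_of_deviation [Preorder α] {v p : V} (hv : IsForced E v)
    (hx : ValidProfile E x) (hx' : ValidProfile E x') (hdev : ∀ w, w ≠ p → x' w = x w)
    (hopt : ∀ w, IsForced E w → IsOneShotOptimalAt E f x w) :
    f p (outcome E v x') ≤ f p (outcome E v x) := by
  induction hv with
  | closed hc => rw [hx.outcome_of_isClosed' hc, hx'.outcome_of_isClosed' hc]
  | @step v hc hsucc ih =>
    have hedge : E v (x' v) := hx'.edge_of_not_isClosed' hc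
    rw [← hx'.outcome_apply]
    refine (ih _ hedge).trans ?_
    by_cases hvp : v = p
    · exact hvp ▸ hopt v (.step hc hsucc) _ hedge (hsucc _ hedge)
    · rw [hdev v hvp, hx.outcome_apply]

theorem exists_isOneShotOptimalAt_of_isForced [LinearOrder α] (E : V → V → Prop)
    (f : V → Set V → α) :
    ∃ x, ValidProfile E x ∧ ∀ v, IsForced E v → IsOneShotOptimalAt E f x v := by
  obtain ⟨τ, τ_leaf, τ_node⟩ := exists_backward_induction (wellFounded_edge_isForced E) (scc E) f
  have exists_move (v : V) : ∃ w, (isTerminal E v → w = v) ∧ (¬ isTerminal E v → E v w) ∧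
      (¬ IsClosed' E (scc E v) → IsForced E v →
        τ v = τ w ∧ ∀ w', E v w' → f v (τ w') ≤ f v (τ w)) := by
    by_cases ht : isTerminal E v
    · exact ⟨v, fun _ => rfl, fun h => absurd ht h,
        fun h => absurd (isClosed'_scc_of_isTerminal ht) h⟩
    obtain ⟨w₀, hw₀⟩ : ∃ w, E v w := by simpa only [isTerminal, not_forall, not_not] using ht
    by_cases hv : ¬ IsClosed' E (scc E v) ∧ IsForced E v
    · obtain ⟨w, hw, hτ, hmax⟩ := τ_node v ⟨w₀, hw₀, hv⟩
      exact ⟨w, fun h => absurd h ht, fun _ => hw.1, fun _ _ => ⟨hτ, fun w' h => hmax w' ⟨h, hv⟩⟩⟩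
    · exact ⟨w₀, fun h => absurd h ht, fun _ => hw₀, fun h h' => absurd ⟨h, h'⟩ hv⟩
  choose x x_terminal x_edge x_best using exists_move
  have hx : ValidProfile E x := fun v => ⟨x_terminal v, x_edge v⟩
  have outcome_eq {v : V} (hv : IsForced E v) : outcome E v x = τ v := by
    induction hv with
    | @closed v hc =>
      rw [hx.outcome_of_isClosed' hc, τ_leaf v fun w hw => hw.2.1 hc]
    | @step v hc hsucc ih =>
      rw [← hx.outcome_apply, (x_best v hc (.step hc hsucc)).1, ih _ (hx.edge_of_not_isClosed' hc)]
  refine ⟨x, hx, fun v hv w hvw hw => ?_⟩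
  by_cases hc : IsClosed' E (scc E v)
  · have hwv : w ∈ scc E v := hc v (self_mem_scc v) w hvw
    rw [hx.outcome_of_isClosed' hc, hx.outcome_of_isClosed' (by rwa [scc_eq_of_mem hwv]),
      scc_eq_of_mem hwv]
  · rw [outcome_eq hv, outcome_eq hw, (x_best v hc hv).1]
    exact (x_best v hc hv).2 w hvw

end Optimality

section ExitProfiles

variable {V α : Type*} [Fintype V] {E : V → V → Prop} {f : V → Set V → α} {v₀ e : V} {x : V → V}

/-- The profile `x` leads the play from the unforced position `v₀` to `e` without meeting an exit on
the way, enters the forced region at `e` and at no other position, and is one-shot optimal at `e`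
and throughout the forced region. -/
structure IsExitProfile [LE α] (E : V → V → Prop) (f : V → Set V → α) (v₀ e : V) (x : V → V) :
    Prop where
  valid : ValidProfile E x
  start_not_isForced : ¬ IsForced E v₀
  reaches : ∃ k, x^[k] v₀ = e ∧ ∀ j < k, ¬ IsExit E (x^[j] v₀)
  isForced_apply : IsForced E (x e)
  stays : ∀ v, ¬ IsForced E v → v ≠ e → ¬ IsForced E (x v)
  optimal_exit : IsOneShotOptimalAt E f x e
  optimal_forced : ∀ v, IsForced E v → IsOneShotOptimalAt E f x v

theorem exists_isExitProfile [LinearOrder α] (f : V → Set V → α) (hv₀ : ¬ IsForced E v₀) :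
    ∃ e x, IsExitProfile E f v₀ e x := by
  classical
  obtain ⟨s, hs, hopt⟩ := exists_isOneShotOptimalAt_of_isForced E f
  obtain ⟨next, hnext, k, he, hfirst⟩ := exists_successor_first_isExit hv₀
  set e := next^[k] v₀
  obtain ⟨w, ⟨hew, hw⟩, hbest⟩ := Set.exists_max_image {w | E e w ∧ IsForced E w}
    (fun w => f e (outcome E w s)) (Set.toFinite _) he.2
  let x (v : V) : V := if IsForced E v then s v else if v = e then w else next v
  have x_forced {v : V} (hv : IsForced E v) : x v = s v := if_pos hv
  have x_exit : x e = w := (if_neg he.1).trans (if_pos rfl)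
  have x_stay {v : V} (hv : ¬ IsForced E v) (hve : v ≠ e) : x v = next v :=
    (if_neg hv).trans (if_neg hve)
  have hx : ValidProfile E x := by
    intro v
    by_cases hv : IsForced E v
    · exact x_forced hv ▸ hs v
    refine ⟨fun ht => absurd (.closed (isClosed'_scc_of_isTerminal ht)) hv, fun _ => ?_⟩
    by_cases hve : v = e
    · rwa [hve, x_exit]
    · exact x_stay hv hve ▸ (hnext v hv).1
  have outcome_eq {v : V} (hv : IsForced E v) : outcome E v x = outcome E v s :=
    hv.outcome_congr hs hx fun _ => x_forced
  have next_unforced (j : ℕ) : ¬ IsForced E (next^[j] v₀) :=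
    Set.MapsTo.iterate (s := {v | ¬ IsForced E v}) (fun v hv => (hnext v hv).2) j hv₀
  have play_eq {j : ℕ} (hj : j ≤ k) : x^[j] v₀ = next^[j] v₀ :=
    iterate_eq_iterate_of_forall_lt fun i hi => x_stay (next_unforced i)
      fun h => hfirst i (hi.trans_le hj) (h ▸ he)
  refine ⟨e, x, ⟨hx, hv₀, ⟨k, play_eq le_rfl, fun j hj => play_eq hj.le ▸ hfirst j hj⟩,
    x_exit ▸ hw, fun v hv hve => x_stay hv hve ▸ (hnext v hv).2, fun w' hew' hw' => ?_,
    fun v hv w' hvw' hw' => ?_⟩⟩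
  · rw [← hx.outcome_apply e, x_exit, outcome_eq hw, outcome_eq hw']
    exact hbest w' ⟨hew', hw'⟩
  · rw [outcome_eq hv, outcome_eq hw']
    exact hopt v hv w' hvw' hw'

namespace IsExitProfile

theorem outcome_eq [LE α] (h : IsExitProfile E f v₀ e x) : outcome E e x = outcome E v₀ x := by
  obtain ⟨k, rfl, -⟩ := h.reaches
  exact h.valid.outcome_iterate v₀ k

theorem terminalOutcome [LE α] (h : IsExitProfile E f v₀ e x) :
    TerminalOutcome E (outcome E v₀ x) := by
  rw [← h.outcome_eq, ← h.valid.outcome_apply]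
  exact h.isForced_apply.terminalOutcome h.valid

variable {x' : V → V} {p : V}

theorem outcome_eq_of_deviation_at_isExit [LE α] (h : IsExitProfile E f v₀ e x)
    (hx' : ValidProfile E x') (hdev : ∀ v, v ≠ p → x' v = x v) (hp : IsExit E p) (hpe : p ≠ e) :
    outcome E v₀ x' = outcome E v₀ x := by
  obtain ⟨k, hk, hpath⟩ := h.reaches
  have hk' : x'^[k] v₀ = e :=
    (iterate_eq_iterate_of_forall_lt fun j hj =>
      hdev _ fun hjp => hpath j hj (hjp ▸ hp)).trans hk
  calc outcome E v₀ x'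
      = outcome E (x e) x' := by
        rw [← hx'.outcome_iterate v₀ k, hk', ← hx'.outcome_apply, hdev e hpe.symm]
    _ = outcome E (x e) x := h.isForced_apply.outcome_congr h.valid hx' fun w hw =>
        hdev w fun hwp => hp.1 (hwp ▸ hw)
    _ = outcome E v₀ x := by rw [h.valid.outcome_apply, h.outcome_eq]

theorem le_of_deviation_enters [Preorder α] (h : IsExitProfile E f v₀ e x)
    (hx' : ValidProfile E x') (hdev : ∀ v, v ≠ p → x' v = x v) (hp : IsExit E p → p = e)
    {v : V} (hv : ¬ IsForced E v) (hv' : IsForced E (x' v)) :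
    f p (outcome E (x' v) x') ≤ f p (outcome E v₀ x) := by
  have hedge : E v (x' v) := hx'.edge_of_not_isClosed' (not_isClosed'_of_not_isForced hv)
  have hve : v = e := by
    by_contra hve
    have hvp : v = p := by
      by_contra hvp
      exact h.stays v hv hve (hdev v hvp ▸ hv')
    exact hve (hvp.trans (hp (hvp ▸ ⟨hv, _, hedge, hv'⟩)))
  subst hve
  refine (hv'.le_of_deviation h.valid hx' hdev h.optimal_forced).trans ?_
  rw [← h.outcome_eq]
  by_cases hvp : v = p
  · exact hvp ▸ h.optimal_exit _ hedge hv'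
  · rw [hdev v hvp, h.valid.outcome_apply]

theorem le_of_deviation [Preorder α] (h : IsExitProfile E f v₀ e x)
    (hC0 : ∀ t c, TerminalOutcome E t → CyclicOutcome E c → f p c ≤ f p t)
    (hx' : ValidProfile E x') (hdev : ∀ v, v ≠ p → x' v = x v) :
    f p (outcome E v₀ x') ≤ f p (outcome E v₀ x) := by
  by_cases hp : IsExit E p ∧ p ≠ e
  · rw [h.outcome_eq_of_deviation_at_isExit hx' hdev hp.1 hp.2]
  rcases cyclicOutcome_or_exists_enters hx' h.start_not_isForced with hcyc | ⟨v, hv, hv', hout⟩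
  · exact hC0 _ _ h.terminalOutcome hcyc
  · rw [hout]
    exact h.le_of_deviation_enters hx' hdev (by simpa only [not_and, not_not] using hp) hv hv'

end IsExitProfile

end ExitProfiles

section Equilibria

variable {V α : Type*} [Fintype V] [LinearOrder α] {E : V → V → Prop}

theorem exists_positional_equilibrium (v₀ : V) (f : V → Set V → α)
    (hC0 : ∀ v t c, TerminalOutcome E t → CyclicOutcome E c → f v c ≤ f v t) :
    ∃ x, ValidProfile E x ∧ ∀ p x', ValidProfile E x' → (∀ v, v ≠ p → x' v = x v) →
      f p (outcome E v₀ x') ≤ f p (outcome E v₀ x) := by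
  by_cases hv₀ : IsForced E v₀
  · obtain ⟨x, hx, hopt⟩ := exists_isOneShotOptimalAt_of_isForced E f
    exact ⟨x, hx, fun _ _ hx' hdev => hv₀.le_of_deviation hx hx' hdev hopt⟩
  · obtain ⟨e, x, h⟩ := exists_isExitProfile f hv₀
    exact ⟨x, h.valid, fun p _ hx' hdev => h.le_of_deviation (hC0 p) hx' hdev⟩

theorem play_once_C0_Nash_solvable_general {ι : Type*} (control : V → ι) (v₀ : V)
    (u : ι → Set V → α) (hcontrol : Set.InjOn control {v | ¬ isTerminal E v})
    (hC0 : ∀ i t c, TerminalOutcome E t → CyclicOutcome E c → u i c ≤ u i t) :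
    ∃ x, ValidProfile E x ∧ ∀ i x', ValidProfile E x' → (∀ v, control v ≠ i → x' v = x v) →
      u i (outcome E v₀ x') ≤ u i (outcome E v₀ x) := by
  obtain ⟨x, hx, hNE⟩ := exists_positional_equilibrium v₀ (fun v => u (control v))
    fun v => hC0 (control v)
  refine ⟨x, hx, fun i x' hx' hdev => ?_⟩
  have hterminal {v : V} (hv : isTerminal E v) : x' v = x v := by rw [(hx v).1 hv, (hx' v).1 hv]
  by_cases hi : ∃ p, ¬ isTerminal E p ∧ control p = i
  · obtain ⟨p, hp, rfl⟩ := hi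
    refine hNE p x' hx' fun v hvp => ?_
    by_cases hv : isTerminal E v
    · exact hterminal hv
    · exact hdev v fun h => hvp (hcontrol hv hp h)
  · have hsame : x' = x := funext fun v => by
      by_cases hv : isTerminal E v
      · exact hterminal hv
      · exact hdev v fun h => hi ⟨v, hv, h⟩
    rw [hsame]

end Equilibria

/-- Every play-once `n`-person deterministic graphical game (each player
controls exactly one position) whose payoff satisfies condition (C0)
(every terminal outcome is better than every cyclic outcome, for each player)
has a Nash equilibrium in pure stationary strategies. -/
theorem play_once_C0_Nash_solvable {V : Type*} [Fintype V]
    (E : V → V → Prop) {n : ℕ} (control : V → Fin n) (v0 : V)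
    (hv0 : ¬ isTerminal E v0) (u : Fin n → Set V → ℝ)
    (hplayOnce : ∀ i : Fin n, ∃! v : V, ¬ isTerminal E v ∧ control v = i)
    (hC0 : ∀ (i : Fin n) (t c : Set V),
      TerminalOutcome E t → CyclicOutcome E c → u i t > u i c) :
    ∃ x : V → V, ValidProfile E x ∧ IsNE E control v0 u x :=
  play_once_C0_Nash_solvable_general control v0 u
    (fun _ hv w hw h => (hplayOnce (control w)).unique ⟨hv, h⟩ ⟨hw, rfl⟩)
    fun i t c ht hc => (hC0 i t c ht hc).le
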